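/- arXiv:1707.05610 — 6 statements merged into one kernel-verified Lean document; each statement's English description precedes it below -/
import Mathlib

section
/- Let E be a Hilbert space, Y a normed space, j : E → Y an injective continuous linear map, T > 0 and r ≥ 0. Let u : [0,T] → E satisfy ‖u(t)‖_E ≤ r for all t ∈ [0,T], and assume that for every continuous linear functional g on Y the map t ↦ g(j(u(t))) is continuous on [0,T]. Then u is weakly continuous into E, i.e. for every continuous linear functional f on E the map t ↦ f(u(t)) is continuous on [0,T]. -/
/-!
Identify functionals on `E` with vectors by the Riesz theorem. The vectors `v` for which
`t ↦ ⟪v, u t⟫` is continuous on `[0,T]` form a subspace `S`, and `S` is closed because `u` is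
bounded: if `v` is close to `w`, then `⟪v, u t⟫` is close to `⟪w, u t⟫` uniformly in `t`.
Weak continuity of `j ∘ u` says that `S` contains the representatives of all functionals `g ∘ j`.
A vector `w` orthogonal to these satisfies `g (j w) = 0` for every `g`, hence `j w = 0` by
Hahn–Banach and `w = 0` by injectivity. So `S` is dense as well as closed, i.e. `S = E`.
-/

/-- The vectors `v` such that `t ↦ ⟪v, u t⟫` is continuous on `s`. -/
def weakContSubmodule (𝕜 : Type*) [RCLike 𝕜] {E : Type*} [NormedAddCommGroup E]
    [InnerProductSpace 𝕜 E] (u : ℝ → E) (s : Set ℝ) : Submodule 𝕜 E where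
  carrier := {v | ContinuousOn (fun t => inner 𝕜 v (u t)) s}
  add_mem' {a b} ha hb := by
    simp only [Set.mem_ofPred_eq, inner_add_left] at *
    exact ha.add hb
  zero_mem' := by
    simp only [Set.mem_ofPred_eq, inner_zero_left]
    exact continuousOn_const
  smul_mem' c a ha := by
    simp only [Set.mem_ofPred_eq, inner_smul_left] at *
    exact continuousOn_const.mul ha

lemma isClosed_weakContSubmodule {𝕜 : Type*} [RCLike 𝕜] {E : Type*} [NormedAddCommGroup E]
    [InnerProductSpace 𝕜 E] {u : ℝ → E} {s : Set ℝ} {r : ℝ} (hr : 0 ≤ r)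
    (hbound : ∀ t ∈ s, ‖u t‖ ≤ r) :
    IsClosed (weakContSubmodule 𝕜 u s : Set E) := by
  refine isClosed_of_closure_subset fun v hv => ?_
  change ContinuousOn (fun t => inner 𝕜 v (u t)) s
  refine continuousOn_of_uniform_approx_of_continuousOn fun U hU => ?_
  obtain ⟨ε, hε, hεU⟩ := Metric.mem_uniformity_dist.1 hU
  -- Dividing by `r + 1` rather than `r` also covers `r = 0`.
  obtain ⟨w, hw, hvw⟩ := Metric.mem_closure_iff.1 hv (ε / (r + 1)) (by positivity)
  refine ⟨fun t => inner 𝕜 w (u t), hw, fun t ht => hεU ?_⟩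
  rw [dist_eq_norm, ← inner_sub_left]
  rw [dist_eq_norm, lt_div_iff₀ (by positivity)] at hvw
  calc ‖inner 𝕜 (v - w) (u t)‖ ≤ ‖v - w‖ * ‖u t‖ := norm_inner_le_norm _ _
    _ ≤ ‖v - w‖ * (r + 1) := by
      gcongr
      linarith [hbound t ht]
    _ < ε := hvw

/-- **Strauss lemma.** Let `E` be a Hilbert space, `Y` a normed space, `j : E → Y` an
injective continuous linear map, `T > 0` and `r ≥ 0`. If `u : [0,T] → E` is bounded by `r`
in `E` and weakly continuous into `Y` (i.e. `t ↦ g (j (u t))` is continuous for every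
continuous linear functional `g` on `Y`), then `u` is weakly continuous into `E`. -/
theorem stmt1 {𝕜 : Type*} [RCLike 𝕜]
    {E Y : Type*} [NormedAddCommGroup E] [InnerProductSpace 𝕜 E] [CompleteSpace E]
    [NormedAddCommGroup Y] [NormedSpace 𝕜 Y]
    (j : E →L[𝕜] Y) (hj : Function.Injective j)
    (T r : ℝ) (hT : 0 < T) (hr : 0 ≤ r)
    (u : ℝ → E)
    (hbound : ∀ t ∈ Set.Icc (0 : ℝ) T, ‖u t‖ ≤ r)
    (hweak : ∀ g : Y →L[𝕜] 𝕜, ContinuousOn (fun t => g (j (u t))) (Set.Icc (0 : ℝ) T)) :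
    ∀ f : E →L[𝕜] 𝕜, ContinuousOn (fun t => f (u t)) (Set.Icc (0 : ℝ) T) := by
  intro f
  set S := weakContSubmodule 𝕜 u (Set.Icc (0 : ℝ) T) with hS
  have hmem (g : Y →L[𝕜] 𝕜) : (InnerProductSpace.toDual 𝕜 E).symm (g.comp j) ∈ S := by
    change ContinuousOn (fun t => inner 𝕜 _ (u t)) _
    simpa only [InnerProductSpace.toDual_symm_apply, ContinuousLinearMap.comp_apply] using hweak g
  have horth : Sᗮ = ⊥ := by
    refine (Submodule.eq_bot_iff _).2 fun w hw => hj ?_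
    rw [map_zero]
    refine SeparatingDual.eq_zero_of_forall_dual_eq_zero (R := 𝕜) fun g => ?_
    simpa only [InnerProductSpace.toDual_symm_apply, ContinuousLinearMap.comp_apply] using
      (Submodule.mem_orthogonal S w).1 hw _ (hmem g)
  have htop : S = ⊤ := by
    rw [← Submodule.topologicalClosure_eq_top_iff] at horth
    rwa [(isClosed_weakContSubmodule hr hbound).submodule_topologicalClosure_eq] at horth
  have hf : (InnerProductSpace.toDual 𝕜 E).symm f ∈ S := htop ▸ Submodule.mem_top
  change ContinuousOn (fun t => inner 𝕜 _ (u t)) _ at hf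
  simpa only [InnerProductSpace.toDual_symm_apply] using hf
end

section
/- Let E be a Hilbert space, Y a normed space and j : E → Y an injective continuous linear map. Let r ≥ 0 and let (x_n) be a sequence in E with ‖x_n‖_E ≤ r for all n, such that j x_n converges to some y in Y. Then there exists x ∈ E with j x = y and ‖x‖_E ≤ r, and x_n converges to x weakly in E, i.e. f(x_n) → f(x) for every continuous linear functional f on E. -/
/-!
By the Riesz representation theorem, the sequence can be viewed in a ball of the dual of `E`, which
is weak-* compact by Banach–Alaoglu. Hence along every ultrafilter the bounded sequence has a weak
limit in the ball of radius `r`. As `j` is weak-to-weak continuous and functionals on `Y` separate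
points, `j` sends each such limit to `y`. Injectivity of `j` makes all these limits
equal, so the sequence itself converges weakly.
-/

open Filter Topology

/-- Weak compactness of closed balls in a Hilbert space, in ultrafilter form. -/
theorem exists_weak_limit_ultrafilter {𝕜 : Type*} [RCLike 𝕜]
    {E : Type*} [NormedAddCommGroup E] [InnerProductSpace 𝕜 E] [CompleteSpace E]
    {ι : Type*} (U : Ultrafilter ι) (x : ι → E) (r : ℝ) (hb : ∀ n, ‖x n‖ ≤ r) :
    ∃ z : E, ‖z‖ ≤ r ∧ ∀ f : E →L[𝕜] 𝕜, Tendsto (fun n => f (x n)) U (𝓝 (f z)) := by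
  let φ : ι → WeakDual 𝕜 E := fun n => StrongDual.toWeakDual (InnerProductSpace.toDual 𝕜 E (x n))
  have hK := WeakDual.isCompact_closedBall (𝕜 := 𝕜) (E := E) 0 r
  obtain ⟨ψ, hψ, hlim⟩ := hK.ultrafilter_le_nhds' (U.map φ) (by
    refine Ultrafilter.mem_map.2 (Filter.univ_mem' fun n => ?_)
    simpa [φ] using hb n)
  have hlim' : Tendsto φ U (𝓝 ψ) := hlim
  refine ⟨(InnerProductSpace.toDual 𝕜 E).symm (WeakDual.toStrongDual ψ), ?_, fun f => ?_⟩
  · simpa using hψ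
  · obtain ⟨v, rfl⟩ := (InnerProductSpace.toDual 𝕜 E).surjective f
    have h := ((WeakDual.eval_continuous v).tendsto ψ).comp hlim'
    -- Conjugation turns evaluation at `v` into the functional represented by `v`.
    have h2 := (RCLike.continuous_conj (K := 𝕜)).tendsto _ |>.comp h
    have e : (InnerProductSpace.toDual 𝕜 E v)
        ((InnerProductSpace.toDual 𝕜 E).symm (WeakDual.toStrongDual ψ)) =
        (starRingEnd 𝕜) (ψ v) := by
      rw [InnerProductSpace.toDual_apply_apply, ← inner_conj_symm,
        InnerProductSpace.toDual_symm_apply]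
      rfl
    rw [e]
    refine h2.congr fun n => ?_
    rw [InnerProductSpace.toDual_apply_apply, ← inner_conj_symm]
    rfl


/-- Let `E` be a Hilbert space, `Y` a normed space, `j : E → Y` injective continuous linear.
If `(xₙ)` is a sequence in `E` with `‖xₙ‖ ≤ r` and `j xₙ → y` in `Y`, then there is `x ∈ E`
with `j x = y`, `‖x‖ ≤ r`, and `xₙ → x` weakly in `E`. -/
theorem stmt2 {𝕜 : Type*} [RCLike 𝕜]
    {E Y : Type*} [NormedAddCommGroup E] [InnerProductSpace 𝕜 E] [CompleteSpace E]
    [NormedAddCommGroup Y] [NormedSpace 𝕜 Y]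
    (j : E →L[𝕜] Y) (hj : Function.Injective j)
    (r : ℝ) (hr : 0 ≤ r)
    (x : ℕ → E) (hb : ∀ n, ‖x n‖ ≤ r)
    (y : Y) (hconv : Filter.Tendsto (fun n => j (x n)) Filter.atTop (nhds y)) :
    ∃ z : E, j z = y ∧ ‖z‖ ≤ r ∧
      ∀ f : E →L[𝕜] 𝕜, Filter.Tendsto (fun n => f (x n)) Filter.atTop (nhds (f z)) := by
  have key : ∀ U : Ultrafilter ℕ, (U : Filter ℕ) ≤ Filter.atTop → ∃ z : E, j z = y ∧ ‖z‖ ≤ r ∧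
      ∀ f : E →L[𝕜] 𝕜, Filter.Tendsto (fun n => f (x n)) U (nhds (f z)) := by
    intro U hU
    obtain ⟨z, hz, hf⟩ := exists_weak_limit_ultrafilter (𝕜 := 𝕜) U x r hb
    refine ⟨z, ?_, hz, hf⟩
    rw [SeparatingDual.eq_iff_forall_dual_eq (R := 𝕜)]
    intro g
    exact tendsto_nhds_unique (hf (g.comp j)) ((g.continuous.tendsto y).comp (hconv.mono_left hU))
  obtain ⟨z, hjz, hz, -⟩ := key (Ultrafilter.of Filter.atTop) (Ultrafilter.of_le _)
  refine ⟨z, hjz, hz, fun f => Filter.tendsto_iff_ultrafilter _ _ _ |>.2 fun U hU => ?_⟩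
  obtain ⟨z', hjz', -, hf⟩ := key U hU
  obtain rfl : z' = z := hj (hjz'.trans hjz.symm)
  exact hf f
end

section
/- Let E be a Hilbert space, Y a Banach space, j : E → Y an injective continuous linear map, T > 0 and r ≥ 0. Let u_n, u : [0,T] → E be functions such that ‖u_n(t)‖_E ≤ r for all n and all t ∈ [0,T], each composite j ∘ u_n : [0,T] → Y is continuous, j ∘ u : [0,T] → Y is continuous, and sup_{t ∈ [0,T]} ‖j(u_n(t)) − j(u(t))‖_Y → 0 as n → ∞. Then: (i) ‖u(t)‖_E ≤ r for all t ∈ [0,T]; (ii) for every continuous linear functional f on E one has sup_{t ∈ [0,T]} |f(u_n(t)) − f(u(t))| → 0 as n → ∞; (iii) u and every u_n are weakly continuous into E, i.e. t ↦ f(u_n(t)) and t ↦ f(u(t)) are continuous for every continuous linear functional f on E. -/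
/-!
Functionals of the form `g ∘ j` with `g : Y →L[𝕜] 𝕜` are dense in the dual of `E`: a vector of `E`
orthogonal to all their Riesz representatives is killed by every `g ∘ j`, hence is zero by
Hahn–Banach and the injectivity of `j` (`exists_comp_approx`). Consequently every `f` in the dual
of `E` is, on each ball of `E`, uniformly continuous for the weaker distance `‖j x - j y‖`
(`uniform_control`); this transfers both the uniform convergence and the continuity from `Y` to
the weak topology of `E`. The bound on the limit is weak lower semicontinuity of the norm, tested
against the same dense set of functionals (`norm_le_of_tendsto`).
-/

/-- Functionals that factor through `j` are dense, in operator norm, in the dual of `E`. -/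
theorem exists_comp_approx {𝕜 : Type*} [RCLike 𝕜]
    {E Y : Type*} [NormedAddCommGroup E] [InnerProductSpace 𝕜 E] [CompleteSpace E]
    [NormedAddCommGroup Y] [NormedSpace 𝕜 Y]
    (j : E →L[𝕜] Y) (hj : Function.Injective j) (f : E →L[𝕜] 𝕜) {ε : ℝ} (hε : 0 < ε) :
    ∃ g : Y →L[𝕜] 𝕜, ∀ x, ‖f x - g (j x)‖ ≤ ε * ‖x‖ := by
  -- The Riesz representatives of the functionals `g ∘ j`.
  let G : Submodule 𝕜 E :=
    { carrier := {x | ∃ g : Y →L[𝕜] 𝕜, ∀ z, inner 𝕜 x z = g (j z)}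
      zero_mem' := ⟨0, fun z => by simp⟩
      add_mem' := by
        rintro a b ⟨g, hg⟩ ⟨h, hh⟩
        exact ⟨g + h, fun z => by simp [inner_add_left, hg, hh]⟩
      smul_mem' := by
        rintro c a ⟨g, hg⟩
        exact ⟨(starRingEnd 𝕜 c) • g, fun z => by simp [inner_smul_left, hg]⟩ }
  have hG : Gᗮ = ⊥ := by
    rw [Submodule.eq_bot_iff]
    intro z hz
    apply hj
    rw [map_zero]
    refine (SeparatingDual.eq_zero_iff_forall_dual_eq_zero (R := 𝕜) (j z)).2 fun g => ?_
    have hmem : (InnerProductSpace.toDual 𝕜 E).symm (g.comp j) ∈ G :=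
      ⟨g, fun y => by simp [InnerProductSpace.toDual_symm_apply]⟩
    have := (Submodule.mem_orthogonal G z).1 hz _ hmem
    simpa [InnerProductSpace.toDual_symm_apply] using this
  have hd : (InnerProductSpace.toDual 𝕜 E).symm f ∈ closure (G : Set E) := by
    rw [← Submodule.topologicalClosure_coe, Submodule.topologicalClosure_eq_top_iff.2 hG]
    trivial
  obtain ⟨y, ⟨g, hg⟩, hy⟩ := Metric.mem_closure_iff.1 hd ε hε
  refine ⟨g, fun x => ?_⟩
  rw [← hg, ← InnerProductSpace.toDual_symm_apply (𝕜 := 𝕜) (y := f), ← inner_sub_left]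
  rw [dist_eq_norm] at hy
  exact (norm_inner_le_norm _ _).trans (by gcongr)

/-- On a ball of `E`, a continuous linear functional is uniformly continuous with respect to the
distance `‖j x - j y‖`. -/
theorem uniform_control {𝕜 : Type*} [RCLike 𝕜]
    {E Y : Type*} [NormedAddCommGroup E] [InnerProductSpace 𝕜 E] [CompleteSpace E]
    [NormedAddCommGroup Y] [NormedSpace 𝕜 Y]
    (j : E →L[𝕜] Y) (hj : Function.Injective j) (f : E →L[𝕜] 𝕜) {r : ℝ} (hr : 0 ≤ r)
    {ε : ℝ} (hε : 0 < ε) :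
    ∃ δ > 0, ∀ x y, ‖x‖ ≤ r → ‖y‖ ≤ r → dist (j x) (j y) < δ → dist (f x) (f y) < ε := by
  -- `‖x - y‖ ≤ 2r`, so an `ε / (4(r+1))`-approximation of `f` costs at most `ε / 2`.
  obtain ⟨g, hg⟩ := exists_comp_approx j hj f (ε := ε / (4 * (r + 1))) (by positivity)
  refine ⟨ε / (2 * (‖g‖ + 1)), by positivity, fun x y hx hy hxy => ?_⟩
  rw [dist_eq_norm, ← map_sub] at hxy ⊢
  have h1 : ‖f (x - y)‖ ≤ ‖f (x - y) - g (j (x - y))‖ + ‖g (j (x - y))‖ := by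
    simpa using norm_add_le (f (x - y) - g (j (x - y))) (g (j (x - y)))
  have h2 : ε / (4 * (r + 1)) * ‖x - y‖ ≤ ε / 2 := by
    have : ‖x - y‖ ≤ 2 * (r + 1) := (norm_sub_le x y).trans (by linarith)
    calc ε / (4 * (r + 1)) * ‖x - y‖ ≤ ε / (4 * (r + 1)) * (2 * (r + 1)) := by gcongr
      _ = ε / 2 := by field_simp; ring
  have h3 : ‖g (j (x - y))‖ < ε / 2 := by
    calc ‖g (j (x - y))‖ ≤ ‖g‖ * ‖j (x - y)‖ := g.le_opNorm _
      _ ≤ (‖g‖ + 1) * ‖j (x - y)‖ := by gcongr; linarith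
      _ < (‖g‖ + 1) * (ε / (2 * (‖g‖ + 1))) := by gcongr
      _ = ε / 2 := by field_simp
  linarith [hg (x - y)]

theorem norm_le_of_tendsto {𝕜 : Type*} [RCLike 𝕜]
    {E Y : Type*} [NormedAddCommGroup E] [InnerProductSpace 𝕜 E] [CompleteSpace E]
    [NormedAddCommGroup Y] [NormedSpace 𝕜 Y]
    (j : E →L[𝕜] Y) (hj : Function.Injective j) {r : ℝ} (hr : 0 ≤ r) {x : ℕ → E} {y : E}
    (hx : ∀ n, ‖x n‖ ≤ r)
    (h : Filter.Tendsto (fun n => j (x n)) Filter.atTop (nhds (j y))) : ‖y‖ ≤ r := by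
  refine NormedSpace.norm_le_dual_bound 𝕜 y hr fun f => ?_
  have key : ∀ ε > 0, ‖f y‖ ≤ r * ‖f‖ + ε * (r + ‖y‖) := by
    intro ε hε
    obtain ⟨g, hg⟩ := exists_comp_approx j hj f hε
    have hgy : ‖g (j y)‖ ≤ (‖f‖ + ε) * r := by
      refine le_of_tendsto ((g.continuous.tendsto _).comp h).norm (.of_forall fun n => ?_)
      have h1 : ‖g (j (x n))‖ ≤ ‖f (x n)‖ + ‖f (x n) - g (j (x n))‖ := by
        simpa using norm_sub_le (f (x n)) (f (x n) - g (j (x n)))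
      calc ‖g (j (x n))‖ ≤ ‖f‖ * ‖x n‖ + ε * ‖x n‖ := by
            linarith [hg (x n), f.le_opNorm (x n)]
        _ = (‖f‖ + ε) * ‖x n‖ := by ring
        _ ≤ (‖f‖ + ε) * r := by gcongr; exact hx n
    have h2 : ‖f y‖ ≤ ‖f y - g (j y)‖ + ‖g (j y)‖ := by
      simpa using norm_add_le (f y - g (j y)) (g (j y))
    linarith [hg y]
  refine le_of_forall_pos_le_add fun η hη => ?_
  have hpos : 0 < r + ‖y‖ + 1 := by positivity
  have h1 := key (η / (r + ‖y‖ + 1)) (by positivity)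
  have h2 : η / (r + ‖y‖ + 1) * (r + ‖y‖) ≤ η := by
    rw [div_mul_eq_mul_div, div_le_iff₀ hpos]
    nlinarith
  linarith

/-- Let `E` be a Hilbert space, `Y` a Banach space, `j : E → Y` injective continuous linear,
`T > 0`, `r ≥ 0`. If `uₙ, u : [0,T] → E` satisfy `‖uₙ(t)‖_E ≤ r`, the composites `j ∘ uₙ`
and `j ∘ u` are continuous on `[0,T]`, and `j ∘ uₙ → j ∘ u` uniformly on `[0,T]`, then:
(i) `‖u(t)‖_E ≤ r` on `[0,T]`; (ii) `f ∘ uₙ → f ∘ u` uniformly on `[0,T]` for every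
continuous linear functional `f` on `E`; (iii) `u` and every `uₙ` are weakly continuous
into `E`. -/
theorem stmt3 {𝕜 : Type*} [RCLike 𝕜]
    {E Y : Type*} [NormedAddCommGroup E] [InnerProductSpace 𝕜 E] [CompleteSpace E]
    [NormedAddCommGroup Y] [NormedSpace 𝕜 Y] [CompleteSpace Y]
    (j : E →L[𝕜] Y) (hj : Function.Injective j)
    (T r : ℝ) (hT : 0 < T) (hr : 0 ≤ r)
    (u : ℕ → ℝ → E) (v : ℝ → E)
    (hb : ∀ n, ∀ t ∈ Set.Icc (0 : ℝ) T, ‖u n t‖ ≤ r)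
    (hcn : ∀ n, ContinuousOn (fun t => j (u n t)) (Set.Icc (0 : ℝ) T))
    (hc : ContinuousOn (fun t => j (v t)) (Set.Icc (0 : ℝ) T))
    (hconv : TendstoUniformlyOn (fun n t => j (u n t)) (fun t => j (v t))
      Filter.atTop (Set.Icc (0 : ℝ) T)) :
    (∀ t ∈ Set.Icc (0 : ℝ) T, ‖v t‖ ≤ r) ∧
    (∀ f : E →L[𝕜] 𝕜, TendstoUniformlyOn (fun n t => f (u n t)) (fun t => f (v t))
      Filter.atTop (Set.Icc (0 : ℝ) T)) ∧
    (∀ f : E →L[𝕜] 𝕜, (∀ n, ContinuousOn (fun t => f (u n t)) (Set.Icc (0 : ℝ) T)) ∧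
      ContinuousOn (fun t => f (v t)) (Set.Icc (0 : ℝ) T)) := by
  have hv : ∀ t ∈ Set.Icc (0 : ℝ) T, ‖v t‖ ≤ r := fun t ht =>
    norm_le_of_tendsto j hj hr (fun n => hb n t ht) (hconv.tendsto_at ht)
  have hcont : ∀ (f : E →L[𝕜] 𝕜) (w : ℝ → E), (∀ t ∈ Set.Icc (0 : ℝ) T, ‖w t‖ ≤ r) →
      ContinuousOn (fun t => j (w t)) (Set.Icc (0 : ℝ) T) →
      ContinuousOn (fun t => f (w t)) (Set.Icc (0 : ℝ) T) := by
    intro f w hw hjw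
    rw [Metric.continuousOn_iff] at hjw ⊢
    intro b hb ε hε
    obtain ⟨δ, hδ, H⟩ := uniform_control j hj f hr hε
    obtain ⟨η, hη, H'⟩ := hjw b hb δ hδ
    exact ⟨η, hη, fun a ha hab => H _ _ (hw a ha) (hw b hb) (H' a ha hab)⟩
  refine ⟨hv, fun f => ?_, fun f => ⟨fun n => hcont f _ (hb n) (hcn n), hcont f v hv hc⟩⟩
  rw [Metric.tendstoUniformlyOn_iff] at hconv ⊢
  intro ε hε
  obtain ⟨δ, hδ, H⟩ := uniform_control j hj f hr hε
  filter_upwards [hconv δ hδ] with n hn t ht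
  exact H _ _ (hv t ht) (hb n t ht) (hn t ht)
end

section
/- Let X₀, X, X₁ be Banach spaces, j₀ : X₀ → X a compact linear operator, j₁ : X → X₁ an injective continuous linear operator, p ∈ [1, ∞), T > 0 and C > 0. Let v_n, v : [0,T] → X₀ be functions with ‖v_n(t)‖_{X₀} ≤ C and ‖v(t)‖_{X₀} ≤ C for all n and all t ∈ [0,T], such that the maps t ↦ j₀(v_n(t)) and t ↦ j₀(v(t)) are strongly (Bochner) measurable from [0,T] into X, and sup_{t ∈ [0,T]} ‖j₁(j₀(v_n(t))) − j₁(j₀(v(t)))‖_{X₁} → 0 as n → ∞. Then ∫₀^T ‖j₀(v_n(t)) − j₀(v(t))‖_X^p dt → 0 as n → ∞. -/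
/-!
An injective continuous map is a homeomorphism from a compact set onto its image. The differences
`j₀ (vₙ t) - j₀ (w t)` all lie in the `j₀`-image of the ball of radius `2C`, hence in one compact
set of `X`, and on it smallness of `‖j₁ x‖` forces smallness of `‖x‖`
(`exists_pos_norm_lt_of_isCompact`). Uniform convergence in `X₁` therefore upgrades to uniform
convergence in `X`, and the interval `[0,T]` has finite measure, so the integrals of the `p`-th
powers tend to `0`.
-/

open MeasureTheory

/-- The form taken here by Lions' interpolation inequality `‖x‖_X ≤ ε ‖x‖_{X₀} + C_ε ‖x‖_{X₁}`:
away from `0`, the function `‖j ·‖` has a positive minimum on a compact set. -/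
theorem exists_pos_norm_lt_of_isCompact {X Y : Type*}
    [NormedAddCommGroup X] [NormedSpace ℝ X] [NormedAddCommGroup Y] [NormedSpace ℝ Y]
    (j : X →L[ℝ] Y) (hj : Function.Injective j) {K : Set X} (hK : IsCompact K)
    {ε : ℝ} (hε : 0 < ε) : ∃ δ > 0, ∀ x ∈ K, ‖j x‖ < δ → ‖x‖ < ε := by
  have hL : IsCompact (K \ Metric.ball 0 ε) := hK.diff Metric.isOpen_ball
  have hpos : ∀ x ∈ K \ Metric.ball 0 ε, 0 < ‖j x‖ := by
    intro x hx
    rw [norm_pos_iff, map_ne_zero_iff j hj]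
    rintro rfl
    exact hx.2 (Metric.mem_ball_self hε)
  obtain ⟨δ, hδ, hle⟩ := hL.exists_forall_le' (j.continuous.norm.continuousOn) hpos
  refine ⟨δ, hδ, fun x hx hlt => ?_⟩
  by_contra hge
  exact absurd hlt (not_lt.mpr (hle x ⟨hx, by simpa using hge⟩))

/-- **Lᵖ-convergence step of the compactness criterion.** Let `X₀ ↪ X ↪ X₁` be Banach
spaces, the first embedding `j₀` compact, the second `j₁` continuous and injective, and
`p ∈ [1,∞)`, `T > 0`, `C > 0`. If `vₙ, v : [0,T] → X₀` are bounded by `C` in `X₀`,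
`t ↦ j₀ (vₙ t)` and `t ↦ j₀ (v t)` are strongly measurable into `X`, and
`j₁ ∘ j₀ ∘ vₙ → j₁ ∘ j₀ ∘ v` uniformly on `[0,T]` in `X₁`, then
`∫₀ᵀ ‖j₀ (vₙ t) − j₀ (v t)‖_X^p dt → 0`. -/
theorem stmt5 {X₀ X X₁ : Type*}
    [NormedAddCommGroup X₀] [NormedSpace ℝ X₀] [CompleteSpace X₀]
    [NormedAddCommGroup X] [NormedSpace ℝ X] [CompleteSpace X]
    [NormedAddCommGroup X₁] [NormedSpace ℝ X₁] [CompleteSpace X₁]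
    (j₀ : X₀ →L[ℝ] X) (hj₀ : IsCompactOperator j₀)
    (j₁ : X →L[ℝ] X₁) (hj₁ : Function.Injective j₁)
    (p T C : ℝ) (hp : 1 ≤ p) (hT : 0 < T) (hC : 0 < C)
    (v : ℕ → ℝ → X₀) (w : ℝ → X₀)
    (hbv : ∀ n, ∀ t ∈ Set.Icc (0 : ℝ) T, ‖v n t‖ ≤ C)
    (hbw : ∀ t ∈ Set.Icc (0 : ℝ) T, ‖w t‖ ≤ C)
    (hmv : ∀ n, AEStronglyMeasurable (fun t => j₀ (v n t))
      (MeasureTheory.volume.restrict (Set.Icc (0 : ℝ) T)))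
    (hmw : AEStronglyMeasurable (fun t => j₀ (w t))
      (MeasureTheory.volume.restrict (Set.Icc (0 : ℝ) T)))
    (hconv : TendstoUniformlyOn (fun n t => j₁ (j₀ (v n t))) (fun t => j₁ (j₀ (w t)))
      Filter.atTop (Set.Icc (0 : ℝ) T)) :
    Filter.Tendsto (fun n => ∫ t in Set.Icc (0 : ℝ) T, ‖j₀ (v n t) - j₀ (w t)‖ ^ p)
      Filter.atTop (nhds 0) := by
  obtain ⟨K, hK, hsub⟩ := hj₀.image_closedBall_subset_compact (2 * C)
  rw [Metric.tendsto_nhds]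
  intro η hη
  -- With `ε ≤ 1`, every `x ∈ [0, ε]` satisfies `x ^ p ≤ x ≤ ε`, which bounds the integral by `ε * T`.
  obtain ⟨ε, hε, hε1, hεT⟩ : ∃ ε : ℝ, 0 < ε ∧ ε ≤ 1 ∧ ε * T < η := by
    refine ⟨min 1 (η / (2 * T)), by positivity, min_le_left _ _, ?_⟩
    calc min 1 (η / (2 * T)) * T ≤ η / (2 * T) * T := by gcongr; exact min_le_right _ _
      _ = η / 2 := by field_simp
      _ < η := half_lt_self hη
  obtain ⟨δ, hδ, hδK⟩ := exists_pos_norm_lt_of_isCompact j₁ hj₁ hK hε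
  filter_upwards [Metric.tendstoUniformlyOn_iff.mp hconv δ hδ] with n hn
  have hbound : ∀ t ∈ Set.Icc (0 : ℝ) T, ‖‖j₀ (v n t) - j₀ (w t)‖ ^ p‖ ≤ ε := by
    intro t ht
    have hmem : j₀ (v n t) - j₀ (w t) ∈ K := by
      refine hsub ⟨v n t - w t, ?_, map_sub j₀ _ _⟩
      rw [mem_closedBall_zero_iff]
      linarith [norm_sub_le (v n t) (w t), hbv n t ht, hbw t ht]
    have hlt := hδK _ hmem (by rw [map_sub, ← dist_eq_norm, dist_comm]; exact hn t ht)
    rw [Real.norm_of_nonneg (by positivity)]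
    calc ‖j₀ (v n t) - j₀ (w t)‖ ^ p ≤ ‖j₀ (v n t) - j₀ (w t)‖ ^ (1 : ℝ) :=
          Real.rpow_le_rpow_of_exponent_ge' (norm_nonneg _) (hlt.le.trans hε1) zero_le_one hp
      _ = ‖j₀ (v n t) - j₀ (w t)‖ := Real.rpow_one _
      _ ≤ ε := hlt.le
  have hint := norm_setIntegral_le_of_norm_le_const (μ := volume) measure_Icc_lt_top hbound
  rw [Real.volume_real_Icc_of_le hT.le, sub_zero] at hint
  rw [dist_zero_right]
  exact hint.trans_lt hεT
end

section
/- Let (M, Σ, μ) be a measure space and α > 1. The map F̂ : L^{α+1}(M; ℂ) → ℝ defined by F̂(u) = (α+1)^{-1} ∫_M |u|^{α+1} dμ is continuously Fréchet differentiable as a map of real Banach spaces, and its derivative at u ∈ L^{α+1}(M; ℂ) is the bounded real-linear functional given by F̂'[u] h = Re ∫_M |u|^{α−1} u · conj(h) dμ for h ∈ L^{α+1}(M; ℂ). -/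
/-!
Write `F(z) = |z|^{α-1} z`, `p = α + 1` and `q = (α + 1) / α`, so that `p` and `q` are conjugate.

*Subgradients.* Young's inequality `(β+1) s^β t ≤ β s^{β+1} + t^{β+1}` with `β = α` says that
`⟪F(a), b - a⟫ ≤ (|b|^{α+1} - |a|^{α+1}) / (α+1)`. Integrating, `D u := ⟪F(u), ·⟫` is a subgradient
of the energy `E` at `u`. A map with a *continuous* choice of subgradients is Fréchet
differentiable with that derivative, since
`0 ≤ E(v) - E(u) - D u (v - u) ≤ (D v - D u) (v - u) ≤ ‖D v - D u‖ ‖v - u‖`.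

*Continuity of `D`.* The same inequality with `β = α - 1` yields the pointwise bound
`|F(a) - F(b)| ≤ (α+1) (|a| + |b|)^{α-1} |a - b|`, and Hölder's inequality with
`(α-1)/p + 1/p = 1/q` turns it into
`‖F(u) - F(v)‖_q ≤ (α+1) (‖u‖_p + ‖v‖_p)^{α-1} ‖u - v‖_p`. Hence `u ↦ F(u)` is continuous
`L^p → L^q`, and composing it with the pairing of `L^q` with `L^p` gives continuity of `D`.
-/

open MeasureTheory

open scoped InnerProductSpace

/-- A function on a normed space with a continuous selection of subgradients `D` is Fréchet
differentiable with derivative `D`. -/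
lemma hasFDerivAt_of_subgradient {X : Type*} [NormedAddCommGroup X] [NormedSpace ℝ X]
    {E : X → ℝ} {D : X → (X →L[ℝ] ℝ)} (hD : Continuous D)
    (h : ∀ u v, D u (v - u) ≤ E v - E u) (u : X) : HasFDerivAt E (D u) u := by
  refine .of_isLittleO (Asymptotics.isLittleO_iff.2 fun ε hε => ?_)
  filter_upwards [Metric.continuousAt_iff'.1 hD.continuousAt ε hε] with v hv
  rw [dist_eq_norm] at hv
  have h1 := h u v
  have h2 := h v u
  have h3 : (D v - D u) (v - u) ≤ ‖D v - D u‖ * ‖v - u‖ :=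
    (le_abs_self _).trans ((D v - D u).le_opNorm _)
  have h4 : D v (u - v) = - D v (v - u) := by rw [← map_neg, neg_sub]
  rw [sub_apply] at h3
  have h5 : ‖D v - D u‖ * ‖v - u‖ ≤ ε * ‖v - u‖ := by gcongr
  rw [Real.norm_of_nonneg (by linarith)]
  linarith

/-- Young's inequality for the exponents `(β + 1) / β` and `β + 1`. -/
lemma young_rpow {β s t : ℝ} (hβ : 0 < β) (hs : 0 ≤ s) (ht : 0 ≤ t) :
    (β + 1) * (s ^ β * t) ≤ β * s ^ (β + 1) + t ^ (β + 1) := by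
  have hb : β + 1 ≠ 0 := by positivity
  have h := Real.geom_mean_le_arith_mean2_weighted (w₁ := β / (β + 1)) (w₂ := 1 / (β + 1))
    (p₁ := s ^ (β + 1)) (p₂ := t ^ (β + 1)) (by positivity) (by positivity) (by positivity)
    (by positivity) (by field_simp)
  rw [← Real.rpow_mul hs, ← Real.rpow_mul ht, mul_div_cancel₀ _ hb, mul_div_cancel₀ _ hb,
    Real.rpow_one] at h
  calc (β + 1) * (s ^ β * t)
      ≤ (β + 1) * (β / (β + 1) * s ^ (β + 1) + 1 / (β + 1) * t ^ (β + 1)) := by gcongr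
    _ = _ := by field_simp

/-- The power nonlinearity `F_α(z) = |z|^{α-1} z`. -/
noncomputable def powNL (α : ℝ) (z : ℂ) : ℂ := ((‖z‖ ^ (α - 1) : ℝ) : ℂ) * z

lemma powNL_eq_smul (α : ℝ) (z : ℂ) : powNL α z = (‖z‖ ^ (α - 1)) • z :=
  (Complex.real_smul).symm

lemma continuous_powNL {α : ℝ} (hα : 1 < α) : Continuous (powNL α) := by
  have : Continuous fun z : ℂ => ‖z‖ ^ (α - 1) :=
    continuous_norm.rpow_const fun _ => Or.inr (by linarith)
  exact (Complex.continuous_ofReal.comp this).mul continuous_id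

lemma norm_powNL_sub_le {α : ℝ} (hα : 1 < α) (a b : ℂ) :
    ‖powNL α a - powNL α b‖ ≤ (α + 1) * ((‖a‖ + ‖b‖) ^ (α - 1) * ‖a - b‖) := by
  wlog hab : ‖b‖ ≤ ‖a‖ generalizing a b
  · rw [norm_sub_rev, norm_sub_rev a, add_comm ‖a‖]
    exact this b a (le_of_not_ge hab)
  have hα' : 0 < α - 1 := by linarith
  have hs : ‖a‖ ^ (α - 1) * ‖a‖ = ‖a‖ ^ α := by
    rw [← Real.rpow_add_one' (norm_nonneg _) (by linarith)]; simp
  have ht : ‖b‖ ^ (α - 1) * ‖b‖ = ‖b‖ ^ α := by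
    rw [← Real.rpow_add_one' (norm_nonneg _) (by linarith)]; simp
  have hY := young_rpow hα' (norm_nonneg a) (norm_nonneg b)
  rw [sub_add_cancel] at hY
  have hmono : ‖b‖ ^ (α - 1) ≤ ‖a‖ ^ (α - 1) := by gcongr
  have hd : ‖a‖ - ‖b‖ ≤ ‖a - b‖ := norm_sub_norm_le a b
  have hs0 : 0 ≤ ‖a‖ ^ (α - 1) := by positivity
  have e : powNL α a - powNL α b
      = (‖a‖ ^ (α - 1)) • (a - b) + (‖a‖ ^ (α - 1) - ‖b‖ ^ (α - 1)) • b := by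
    rw [powNL_eq_smul, powNL_eq_smul]; module
  calc ‖powNL α a - powNL α b‖
      ≤ ‖a‖ ^ (α - 1) * ‖a - b‖ + (‖a‖ ^ (α - 1) - ‖b‖ ^ (α - 1)) * ‖b‖ := by
        rw [e]
        refine (norm_add_le _ _).trans_eq ?_
        rw [norm_smul, norm_smul, Real.norm_of_nonneg hs0, Real.norm_of_nonneg (by linarith)]
    _ ≤ ‖a‖ ^ (α - 1) * ‖a - b‖ + α * (‖a‖ ^ (α - 1) * (‖a‖ - ‖b‖)) := by
        have : ‖a‖ ^ (α - 1) * ‖b‖ ≤ ‖a‖ ^ (α - 1) * ‖a‖ := by gcongr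
        nlinarith
    _ ≤ ‖a‖ ^ (α - 1) * ‖a - b‖ + α * (‖a‖ ^ (α - 1) * ‖a - b‖) := by gcongr
    _ = (α + 1) * (‖a‖ ^ (α - 1) * ‖a - b‖) := by ring
    _ ≤ (α + 1) * ((‖a‖ + ‖b‖) ^ (α - 1) * ‖a - b‖) := by
        gcongr
        exact le_add_of_nonneg_right (norm_nonneg b)

/-- `F_α(a)` is a subgradient at `a` of `z ↦ |z|^{α+1} / (α+1)`. -/
lemma inner_powNL_sub_le {α : ℝ} (hα : 1 < α) (a b : ℂ) :
    ⟪powNL α a, b - a⟫_ℝ ≤ (α + 1)⁻¹ * ‖b‖ ^ (α + 1) - (α + 1)⁻¹ * ‖a‖ ^ (α + 1) := by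
  have hY := young_rpow (β := α) (by linarith) (norm_nonneg a) (norm_nonneg b)
  have hs : ‖a‖ ^ (α - 1) * ‖a‖ = ‖a‖ ^ α := by
    rw [← Real.rpow_add_one' (norm_nonneg _) (by linarith)]; simp
  have hs2 : ‖a‖ ^ α * ‖a‖ = ‖a‖ ^ (α + 1) :=
    (Real.rpow_add_one' (norm_nonneg _) (by linarith)).symm
  have hi : ⟪a, b⟫_ℝ ≤ ‖a‖ * ‖b‖ := real_inner_le_norm a b
  have h1 : ⟪powNL α a, b - a⟫_ℝ ≤ ‖a‖ ^ α * ‖b‖ - ‖a‖ ^ (α + 1) := by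
    rw [powNL_eq_smul, real_inner_smul_left, inner_sub_right, real_inner_self_eq_norm_sq]
    calc ‖a‖ ^ (α - 1) * (⟪a, b⟫_ℝ - ‖a‖ ^ 2) ≤ ‖a‖ ^ (α - 1) * (‖a‖ * ‖b‖ - ‖a‖ ^ 2) := by gcongr
      _ = (‖a‖ ^ (α - 1) * ‖a‖) * ‖b‖ - (‖a‖ ^ (α - 1) * ‖a‖) * ‖a‖ := by ring
      _ = _ := by rw [hs, hs2]
  refine h1.trans ?_
  rw [← mul_sub, inv_mul_eq_div, le_div_iff₀ (by linarith)]
  linarith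

section Lp

variable {M : Type*} [MeasurableSpace M] {μ : Measure M} {α : ℝ}

lemma holderConjugate_exponents (hα : 1 < α) :
    ENNReal.HolderConjugate (ENNReal.ofReal ((α + 1) / α)) (ENNReal.ofReal (α + 1)) := by
  apply Real.HolderConjugate.ennrealOfReal
  rw [Real.holderConjugate_iff]
  refine ⟨by rw [lt_div_iff₀] <;> linarith, ?_⟩
  have : α + 1 ≠ 0 := by linarith
  field_simp

lemma holderTriple_exponents (hα : 1 < α) :
    ENNReal.HolderTriple (ENNReal.ofReal ((α + 1) / (α - 1))) (ENNReal.ofReal (α + 1))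
      (ENNReal.ofReal ((α + 1) / α)) := by
  have h1 : 0 < α - 1 := by linarith
  have h2 : 0 < α + 1 := by linarith
  have h3 : 0 < α := by linarith
  constructor
  rw [← ENNReal.ofReal_inv_of_pos (by positivity), ← ENNReal.ofReal_inv_of_pos (by positivity),
    ← ENNReal.ofReal_inv_of_pos (by positivity), ← ENNReal.ofReal_add (by positivity)
    (by positivity)]
  congr 1
  field_simp
  ring

/-- The superposition operator `u ↦ F_α(u)` from `L^{α+1}` to `L^{(α+1)/α}` is Lipschitz on
bounded sets. -/
lemma eLpNorm_powNL_sub_le (hα : 1 < α) {f g : M → ℂ} (hf : AEStronglyMeasurable f μ)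
    (hg : AEStronglyMeasurable g μ) :
    eLpNorm (fun x => powNL α (f x) - powNL α (g x)) (ENNReal.ofReal ((α + 1) / α)) μ ≤
      ENNReal.ofReal (α + 1) *
        (eLpNorm (fun x => ‖f x‖ + ‖g x‖) (ENNReal.ofReal (α + 1)) μ ^ (α - 1) *
          eLpNorm (f - g) (ENNReal.ofReal (α + 1)) μ) := by
  have h1 : 0 < α - 1 := by linarith
  have := holderTriple_exponents hα
  set φ : M → ℝ := fun x => ‖(‖f x‖ + ‖g x‖)‖ ^ (α - 1) with hφ
  have hφm : AEStronglyMeasurable φ μ :=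
    ((hf.norm.add hg.norm).norm.aemeasurable.pow_const _).aestronglyMeasurable
  have hφn : eLpNorm φ (ENNReal.ofReal ((α + 1) / (α - 1))) μ =
      eLpNorm (fun x => ‖f x‖ + ‖g x‖) (ENNReal.ofReal (α + 1)) μ ^ (α - 1) := by
    rw [hφ, eLpNorm_norm_rpow _ h1, ← ENNReal.ofReal_mul (by positivity),
      div_mul_cancel₀ _ h1.ne']
  rw [← hφn]
  refine (eLpNorm_le_mul_eLpNorm_of_ae_le_mul (g := φ • (f - g)) (c := α + 1)
    (.of_forall fun x => ?_) _).trans ?_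
  · refine (norm_powNL_sub_le hα (f x) (g x)).trans_eq ?_
    simp only [hφ, Pi.smul_apply', Pi.sub_apply, norm_smul]
    rw [Real.norm_of_nonneg (by positivity : (0 : ℝ) ≤ ‖f x‖ + ‖g x‖),
      Real.norm_of_nonneg (by positivity)]
  · gcongr
    exact eLpNorm_smul_le_mul_eLpNorm (hf.sub hg) hφm

lemma memLp_powNL (hα : 1 < α) {f : M → ℂ} (hf : MemLp f (ENNReal.ofReal (α + 1)) μ) :
    MemLp (fun x => powNL α (f x)) (ENNReal.ofReal ((α + 1) / α)) μ := by
  refine ⟨(continuous_powNL hα).comp_aestronglyMeasurable hf.1, ?_⟩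
  have h := eLpNorm_powNL_sub_le hα hf.1 (g := fun _ => 0) aestronglyMeasurable_const
  have hz : powNL α 0 = 0 := by simp [powNL]
  simp only [hz, sub_zero, norm_zero, add_zero] at h
  refine h.trans_lt (ENNReal.mul_lt_top ENNReal.ofReal_lt_top (ENNReal.mul_lt_top ?_ ?_))
  · exact ENNReal.rpow_lt_top_of_nonneg (by linarith) (by rw [eLpNorm_norm]; exact hf.2.ne)
  · have : f - (fun _ => 0) = f := sub_zero f
    rw [this]; exact hf.2

/-- The superposition operator `u ↦ |u|^{α-1} u` from `L^{α+1}` to `L^{(α+1)/α}`. -/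
noncomputable def powLp (hα : 1 < α) (u : Lp ℂ (ENNReal.ofReal (α + 1)) μ) :
    Lp ℂ (ENNReal.ofReal ((α + 1) / α)) μ :=
  (memLp_powNL hα (Lp.memLp u)).toLp _

lemma continuous_powLp (hα : 1 < α) [Fact (1 ≤ ENNReal.ofReal (α + 1))]
    [Fact (1 ≤ ENNReal.ofReal ((α + 1) / α))] :
    Continuous (powLp hα : Lp ℂ (ENNReal.ofReal (α + 1)) μ → _) := by
  have h1 : 0 < α - 1 := by linarith
  have key : ∀ u v : Lp ℂ (ENNReal.ofReal (α + 1)) μ,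
      ‖powLp hα v - powLp hα u‖ ≤ (α + 1) * ((‖v‖ + ‖u‖) ^ (α - 1) * ‖v - u‖) := by
    intro u v
    have h := eLpNorm_powNL_sub_le hα (Lp.aestronglyMeasurable v) (Lp.aestronglyMeasurable u)
    have hadd : eLpNorm (fun x => ‖v x‖ + ‖u x‖) (ENNReal.ofReal (α + 1)) μ ≤
        ENNReal.ofReal (‖v‖ + ‖u‖) := by
      refine (eLpNorm_add_le (Lp.aestronglyMeasurable v).norm (Lp.aestronglyMeasurable u).norm
        Fact.out).trans_eq ?_
      rw [eLpNorm_norm, eLpNorm_norm, ENNReal.ofReal_add (norm_nonneg _) (norm_nonneg _),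
        ofReal_norm, ofReal_norm, Lp.enorm_def, Lp.enorm_def]
    have hsub : eLpNorm (⇑v - ⇑u) (ENNReal.ofReal (α + 1)) μ = ENNReal.ofReal ‖v - u‖ := by
      rw [ofReal_norm, Lp.enorm_def, eLpNorm_congr_ae (Lp.coeFn_sub v u)]
    have hL : eLpNorm (fun x => powNL α (v x) - powNL α (u x)) (ENNReal.ofReal ((α + 1) / α)) μ
        = ENNReal.ofReal ‖powLp hα v - powLp hα u‖ := by
      rw [ofReal_norm, powLp, powLp, ← MemLp.toLp_sub, Lp.enorm_toLp]
      rfl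
    rw [hL, hsub] at h
    have h' := h.trans (mul_le_mul_right (mul_le_mul_left
      (ENNReal.rpow_le_rpow hadd h1.le) _) _)
    rw [ENNReal.ofReal_rpow_of_nonneg (by positivity) h1.le, ← ENNReal.ofReal_mul (by positivity),
      ← ENNReal.ofReal_mul (by linarith), ENNReal.ofReal_le_ofReal_iff (by positivity)] at h'
    exact h'
  refine continuous_iff_continuousAt.2 fun u => tendsto_iff_norm_sub_tendsto_zero.2 ?_
  refine squeeze_zero (fun _ => norm_nonneg _) (key u) ?_
  have hc : Continuous fun v : Lp ℂ (ENNReal.ofReal (α + 1)) μ =>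
      (α + 1) * ((‖v‖ + ‖u‖) ^ (α - 1) * ‖v - u‖) :=
    continuous_const.mul (((continuous_norm.add continuous_const).rpow_const
      fun _ => Or.inr h1.le).mul (continuous_id.sub continuous_const).norm)
  simpa using hc.tendsto u

lemma integrable_powNL_mul_conj (hα : 1 < α) {f h : M → ℂ}
    (hf : MemLp f (ENNReal.ofReal (α + 1)) μ) (hh : MemLp h (ENNReal.ofReal (α + 1)) μ) :
    Integrable (fun x => powNL α (f x) * (starRingEnd ℂ) (h x)) μ := by
  have := holderConjugate_exponents hα
  exact memLp_one_iff_integrable.1 ((memLp_powNL hα hf).of_bilin (fun a b => a * (starRingEnd ℂ) b)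
    1 hh ((memLp_powNL hα hf).1.mul (Complex.continuous_conj.comp_aestronglyMeasurable hh.1))
    (.of_forall fun x => by simp))

lemma inner_eq_re_mul_conj (a b : ℂ) : ⟪a, b⟫_ℝ = (a * (starRingEnd ℂ) b).re := by
  simp [Complex.inner, Complex.mul_re, mul_comm]

end Lp

/-- The energy functional `F̂(u) = (α+1)⁻¹ ∫_M |u|^{α+1} dμ` on `L^{α+1}(M;ℂ)` (regarded
as a real Banach space) is continuously Fréchet differentiable, with derivative
`F̂'[u] h = Re ∫_M |u|^{α−1} u ⋅ conj(h) dμ`. -/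
theorem stmt10 {M : Type*} [MeasurableSpace M] (μ : Measure M)
    (α : ℝ) (hα : 1 < α) [Fact (1 ≤ ENNReal.ofReal (α + 1))] :
    ∃ D : Lp ℂ (ENNReal.ofReal (α + 1)) μ → (Lp ℂ (ENNReal.ofReal (α + 1)) μ →L[ℝ] ℝ),
      Continuous D ∧
      (∀ u : Lp ℂ (ENNReal.ofReal (α + 1)) μ,
        HasFDerivAt (fun w : Lp ℂ (ENNReal.ofReal (α + 1)) μ =>
          (α + 1)⁻¹ * ∫ x, ‖w x‖ ^ (α + 1) ∂μ) (D u) u) ∧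
      (∀ u h : Lp ℂ (ENNReal.ofReal (α + 1)) μ,
        D u h = (∫ x, ((‖u x‖ ^ (α - 1) : ℝ) : ℂ) * u x * (starRingEnd ℂ) (h x) ∂μ).re) := by
  have hpq := holderConjugate_exponents hα
  have hp : (0 : ℝ) < α + 1 := by linarith
  have hq : Fact (1 ≤ ENNReal.ofReal ((α + 1) / α)) := ⟨by
    rw [ENNReal.one_le_ofReal, le_div_iff₀] <;> linarith⟩
  set D : Lp ℂ (ENNReal.ofReal (α + 1)) μ → (Lp ℂ (ENNReal.ofReal (α + 1)) μ →L[ℝ] ℝ) :=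
    fun u => (innerSL ℝ : ℂ →L[ℝ] ℂ →L[ℝ] ℝ).lpPairing μ (ENNReal.ofReal ((α + 1) / α))
      (ENNReal.ofReal (α + 1)) (powLp hα u) with hDdef
  have hD : Continuous D := (ContinuousLinearMap.continuous _).comp (continuous_powLp hα)
  have hDi : ∀ u h, D u h = ∫ x, ⟪powNL α (u x), h x⟫_ℝ ∂μ := by
    intro u h
    rw [hDdef]
    simp only [ContinuousLinearMap.lpPairing_eq_integral]
    refine integral_congr_ae ?_
    filter_upwards [(memLp_powNL hα (Lp.memLp u)).coeFn_toLp] with x hx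
    rw [powLp, hx, innerSL_apply_apply]
  have hint : ∀ u h : Lp ℂ (ENNReal.ofReal (α + 1)) μ,
      Integrable (fun x => ⟪powNL α (u x), h x⟫_ℝ) μ := by
    intro u h
    simp only [inner_eq_re_mul_conj]
    exact (integrable_powNL_mul_conj hα (Lp.memLp u) (Lp.memLp h)).re
  have hE : ∀ u : Lp ℂ (ENNReal.ofReal (α + 1)) μ,
      Integrable (fun x => (α + 1)⁻¹ * ‖u x‖ ^ (α + 1)) μ := by
    intro u
    have := (Lp.memLp u).integrable_norm_rpow (by simpa using hp) ENNReal.ofReal_ne_top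
    rw [ENNReal.toReal_ofReal hp.le] at this
    exact this.const_mul _
  refine ⟨D, hD, hasFDerivAt_of_subgradient hD fun u v => ?_, fun u h => ?_⟩
  · rw [← integral_const_mul, ← integral_const_mul, ← integral_sub (hE v) (hE u), hDi]
    refine integral_mono_ae (hint u _) ((hE v).sub (hE u)) ?_
    filter_upwards [Lp.coeFn_sub v u] with x hx
    rw [hx]
    exact inner_powNL_sub_le hα (u x) (v x)
  · rw [hDi]
    simp only [inner_eq_re_mul_conj]
    exact integral_re (integrable_powNL_mul_conj hα (Lp.memLp u) (Lp.memLp h))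
end

section
/- Let (S, 𝒜, μ) be a measure space, α > 1 and p > α. Let Φ = (Φ₁, Φ₂) : ℝ² → ℝ² be continuously differentiable and assume there is C > 0 with |Φ(a, b)| ≤ C (a² + b²)^{α/2} and |Φ'(a, b)| ≤ C (a² + b²)^{(α−1)/2} for all a, b ∈ ℝ. Define G : L^p(S; ℂ) → L^{p/α}(S; ℂ) pointwise by G(u) = Φ₁(Re u, Im u) + i Φ₂(Re u, Im u). Then G is well defined and continuously Fréchet differentiable as a map of real Banach spaces; for u, h ∈ L^p(S; ℂ) its derivative is given pointwise by G'[u] h = ∇Φ₁(Re u, Im u) · (Re h, Im h) + i ∇Φ₂(Re u, Im u) · (Re h, Im h), and ‖G'[u]‖_{L^p → L^{p/α}} ≤ C ‖u‖_{L^p}^{α−1}. -/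
open MeasureTheory

/-! Write `β = α - 1`. Since `β / p + 1 / p = α / p`, Hölder's inequality bounds the `L^{p/α}` norm
of a function `f` with `‖f‖ ≤ a ‖h‖` by `‖a‖_{L^{p/β}} ‖h‖_{L^p}`. With `a = C ‖u‖^β` this makes
`h ↦ Φ'(u) h` a bounded operator of norm at most `C ‖u‖_{L^p}^β`. For the other claims, `a` is
`ψ(u, h)`, where

* `ψ(z, w) = ‖Φ(z + w) - Φ(z) - Φ'(z) w‖ / ‖w‖` for Fréchet differentiability,
* `ψ(z, w) = ‖Φ'(z + w) - Φ'(z)‖` for continuity of the derivative.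

In both cases `ψ(z, w) → 0` as `w → 0`, and `0 ≤ ψ(z, w) ≤ 2 C (‖z‖ + ‖w‖) ^ β` by the growth bound
on `Φ'` (and the mean value inequality). `tendsto_eLpNorm_superposition` shows that then
`ψ(u, h) → 0` in `L^{p/β}` as `h → 0` in `L^p`: along an a.e. convergent subsequence, dominated
convergence applies to the part of `ψ(u, h)` where `‖h‖ ≤ ‖u‖`, and the rest is at most
`2 C (2 ‖h‖) ^ β`, whose `L^{p/β}` norm is a constant times `‖h‖_{L^p} ^ β`. -/

section Superposition

open Filter Topology

variable {S : Type*} [MeasurableSpace S] {μ : Measure S}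

/-- Dominated convergence to `0` in `L^q`, for finite nonzero `q`. -/
lemma tendsto_eLpNorm_zero_of_dominated {q : ENNReal} (hq0 : q ≠ 0) (hqt : q ≠ ⊤)
    {F : ℕ → S → ℝ} {g : S → ℝ} (hF : ∀ n, AEStronglyMeasurable (F n) μ) (hg : MemLp g q μ)
    (hFg : ∀ n x, ‖F n x‖ ≤ ‖g x‖)
    (hlim : ∀ᵐ x ∂μ, Tendsto (fun n => F n x) atTop (𝓝 0)) :
    Tendsto (fun n => eLpNorm (F n) q μ) atTop (𝓝 0) := by
  have hq : 0 < q.toReal := ENNReal.toReal_pos hq0 hqt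
  simp_rw [eLpNorm_eq_lintegral_rpow_enorm_toReal hq0 hqt]
  have key : Tendsto (fun n => ∫⁻ x, ‖F n x‖ₑ ^ q.toReal ∂μ) atTop (𝓝 (∫⁻ _, 0 ∂μ)) := by
    refine tendsto_lintegral_of_dominated_convergence' (fun x => ‖g x‖ₑ ^ q.toReal) ?_ ?_ ?_ ?_
    · intro n
      exact (hF n).enorm.pow_const _
    · intro n
      refine ae_of_all _ fun x => ?_
      exact ENNReal.rpow_le_rpow (enorm_le_iff_norm_le.2 (hFg n x)) hq.le
    · exact (lintegral_rpow_enorm_lt_top_of_eLpNorm_lt_top hq0 hqt hg.2).ne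
    · filter_upwards [hlim] with x hx
      have h1 : Tendsto (fun n => ‖F n x‖ₑ) atTop (𝓝 0) := by
        simpa using hx.enorm
      simpa [ENNReal.zero_rpow_of_pos hq] using h1.ennrpow_const q.toReal
  have := key.ennrpow_const (1 / q.toReal)
  simpa [ENNReal.zero_rpow_of_pos (inv_pos.2 hq)] using this

lemma eLpNorm_norm_rpow_div {p β : ℝ} (hβ : 0 < β) (hp : 0 < p) (u : S → ℂ) :
    eLpNorm (fun x => ‖u x‖ ^ β) (ENNReal.ofReal (p / β)) μ
      = eLpNorm u (ENNReal.ofReal p) μ ^ β := by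
  rw [eLpNorm_norm_rpow u hβ, ← ENNReal.ofReal_mul (by positivity), div_mul_cancel₀ _ hβ.ne']

lemma memLp_norm_rpow_div {p β : ℝ} (hβ : 0 < β) (hp : 0 < p)
    (u : Lp ℂ (ENNReal.ofReal p) μ) :
    MemLp (fun x => ‖u x‖ ^ β) (ENNReal.ofReal (p / β)) μ := by
  refine ⟨((Lp.stronglyMeasurable u).measurable.norm.pow_const β).aestronglyMeasurable, ?_⟩
  rw [eLpNorm_norm_rpow_div hβ hp]
  exact ENNReal.rpow_lt_top_of_nonneg hβ.le (Lp.eLpNorm_ne_top u)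

/-- If `ψ(z, w) → 0` as `w → 0` for every `z`, and `ψ` grows at most like `(‖z‖ + ‖w‖) ^ β`, then
`ψ(u, h) → 0` in `L^{p/β}` as `h → 0` in `L^p`. -/
lemma tendsto_eLpNorm_superposition {p β K : ℝ} (hβ : 0 < β) (hβp : β ≤ p) (hK : 0 ≤ K)
    [Fact (1 ≤ ENNReal.ofReal p)] {ψ : ℂ → ℂ → ℝ} (hm : Measurable (Function.uncurry ψ))
    (h0 : ∀ z w, 0 ≤ ψ z w) (hψ : ∀ z w, ψ z w ≤ K * (‖z‖ + ‖w‖) ^ β)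
    (hlim : ∀ z, Tendsto (ψ z) (𝓝 0) (𝓝 0)) (u : Lp ℂ (ENNReal.ofReal p) μ) :
    Tendsto (fun h : Lp ℂ (ENNReal.ofReal p) μ =>
      eLpNorm (fun x => ψ (u x) (h x)) (ENNReal.ofReal (p / β)) μ) (𝓝 0) (𝓝 0) := by
  have hp : 0 < p := hβ.trans_le hβp
  have hq1 : 1 ≤ ENNReal.ofReal (p / β) := by
    rw [ENNReal.one_le_ofReal, one_le_div hβ]; exact hβp
  set q := ENNReal.ofReal (p / β) with hq
  have hu := (Lp.stronglyMeasurable u).measurable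
  refine tendsto_of_subseq_tendsto fun h hh => ?_
  obtain ⟨ms, hms, hae⟩ := (tendstoInMeasure_of_tendsto_Lp hh).exists_seq_tendsto_ae
  refine ⟨ms, ?_⟩
  have hmeas (n) := (Lp.stronglyMeasurable (h n)).measurable
  have hmψ (n) : Measurable fun x => ψ (u x) (h n x) := hm.comp (hu.prodMk (hmeas n))
  -- The part where the increment is dominated by the base point.
  have A : Tendsto (fun n => eLpNorm (fun x => if ‖h (ms n) x‖ ≤ ‖u x‖ then
      ψ (u x) (h (ms n) x) else 0) q μ) atTop (𝓝 0) := by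
    refine tendsto_eLpNorm_zero_of_dominated (g := fun x => (K * 2 ^ β) * ‖u x‖ ^ β)
      (one_pos.trans_le hq1).ne' ENNReal.ofReal_ne_top (fun n => ?_)
      ((memLp_norm_rpow_div hβ hp u).const_mul _) (fun n x => ?_) ?_
    · exact (Measurable.ite (measurableSet_le (hmeas _).norm hu.norm) (hmψ _)
        measurable_const).aestronglyMeasurable
    · have hg : 0 ≤ (K * 2 ^ β) * ‖u x‖ ^ β := by positivity
      rw [Real.norm_of_nonneg hg]
      split_ifs with hle
      · rw [Real.norm_of_nonneg (h0 _ _)]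
        refine (hψ _ _).trans ?_
        rw [mul_assoc, ← Real.mul_rpow (by norm_num) (norm_nonneg _)]
        gcongr
        linarith
      · simpa using hg
    · filter_upwards [hae, Lp.coeFn_zero ℂ (ENNReal.ofReal p) μ] with x hx hx0
      rw [hx0] at hx
      refine squeeze_zero (fun n => ?_) (fun n => ?_) ((hlim (u x)).comp hx)
      · split_ifs
        exacts [h0 _ _, le_rfl]
      · split_ifs
        exacts [le_rfl, h0 _ _]
  -- The part where the increment dominates the base point.
  have B : Tendsto (fun n => eLpNorm (fun x => (K * 2 ^ β) * ‖h (ms n) x‖ ^ β) q μ)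
      atTop (𝓝 0) := by
    have h1 : Tendsto (fun n => eLpNorm (h (ms n)) (ENNReal.ofReal p) μ) atTop (𝓝 0) := by
      have := (hh.comp hms.tendsto_atTop).enorm
      simpa [Lp.enorm_def] using this
    have h2 := ENNReal.Tendsto.const_mul (a := ‖K * 2 ^ β‖ₑ) (h1.ennrpow_const β)
      (Or.inr enorm_ne_top)
    simp only [ENNReal.zero_rpow_of_pos hβ, mul_zero] at h2
    refine h2.congr fun n => ?_
    rw [← eLpNorm_norm_rpow_div hβ hp, ← hq]
    exact (eLpNorm_const_smul (K * 2 ^ β) (fun x => ‖h (ms n) x‖ ^ β) q μ).symm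
  have AB := A.add B
  rw [add_zero] at AB
  refine tendsto_of_tendsto_of_tendsto_of_le_of_le tendsto_const_nhds AB (fun _ => zero_le)
    fun n => ?_
  refine le_trans (eLpNorm_mono_real fun x => ?_) (eLpNorm_add_le
    (Measurable.ite (measurableSet_le (hmeas _).norm hu.norm) (hmψ _)
        measurable_const).aestronglyMeasurable
    ((memLp_norm_rpow_div hβ hp _).const_mul _).1 hq1)
  rw [Real.norm_of_nonneg (h0 _ _), Pi.add_apply]
  have hg : 0 ≤ (K * 2 ^ β) * ‖h (ms n) x‖ ^ β := by positivity
  split_ifs with hle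
  · linarith
  · rw [zero_add]
    refine (hψ _ _).trans ?_
    rw [mul_assoc, ← Real.mul_rpow (by norm_num) (norm_nonneg _)]
    gcongr
    linarith

/-- Hölder's inequality for a function `f` dominated by `a ‖h‖`. -/
lemma Lp_norm_le_of_le_mul {p q r : ENNReal} [q.HolderTriple p r]
    {f : Lp ℂ r μ} {h : Lp ℂ p μ} {a : S → ℝ} {c : ℝ} (hc : 0 ≤ c)
    (ha : AEStronglyMeasurable a μ) (hac : eLpNorm a q μ ≤ ENNReal.ofReal c)
    (hf : ∀ᵐ x ∂μ, ‖f x‖ ≤ a x * ‖h x‖) : ‖f‖ ≤ c * ‖h‖ := by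
  have h1 : eLpNorm f r μ ≤ eLpNorm a q μ * eLpNorm h p μ := by
    refine (eLpNorm_mono_ae_real hf).trans ?_
    have := eLpNorm_smul_le_mul_eLpNorm (p := q) (q := p) (r := r) (μ := μ)
      (Lp.aestronglyMeasurable h).norm ha
    rwa [eLpNorm_norm] at this
  have h2 : eLpNorm f r μ ≤ ENNReal.ofReal c * eLpNorm h p μ := h1.trans (by gcongr)
  rw [Lp.norm_def, Lp.norm_def, ← ENNReal.toReal_ofReal hc, ← ENNReal.toReal_mul]
  exact ENNReal.toReal_mono (ENNReal.mul_ne_top ENNReal.ofReal_ne_top (Lp.eLpNorm_ne_top h)) h2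

end Superposition

/-- **Composition-operator lemma.** Let `α > 1`, `p > α`, and let `Φ : ℝ² → ℝ²` (identified
with `Φ : ℂ → ℂ` via `ℝ² ≅ ℂ`, so that `G(u) = Φ₁(Re u, Im u) + i Φ₂(Re u, Im u) = Φ(u)`
pointwise) be `C¹` with `|Φ(z)| ≤ C |z|^α` and `|Φ'(z)| ≤ C |z|^{α−1}`. Then the induced
map `G : L^p(S;ℂ) → L^{p/α}(S;ℂ)` is well defined, continuously Fréchet differentiable
(over ℝ) with pointwise derivative `G'[u]h = Φ'(u)·h`, and `‖G'[u]‖ ≤ C ‖u‖_{L^p}^{α−1}`. -/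
theorem stmt11 {S : Type*} [MeasurableSpace S] (μ : Measure S)
    (α p C : ℝ) (hα : 1 < α) (hp : α < p) (hC : 0 < C)
    (Φ : ℂ → ℂ) (hΦ : ContDiff ℝ 1 Φ)
    (hΦ0 : ∀ z : ℂ, ‖Φ z‖ ≤ C * ‖z‖ ^ α)
    (hΦ1 : ∀ z : ℂ, ‖fderiv ℝ Φ z‖ ≤ C * ‖z‖ ^ (α - 1))
    [Fact (1 ≤ ENNReal.ofReal p)] [Fact (1 ≤ ENNReal.ofReal (p / α))] :
    ∃ G : Lp ℂ (ENNReal.ofReal p) μ → Lp ℂ (ENNReal.ofReal (p / α)) μ,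
    ∃ D : Lp ℂ (ENNReal.ofReal p) μ →
        (Lp ℂ (ENNReal.ofReal p) μ →L[ℝ] Lp ℂ (ENNReal.ofReal (p / α)) μ),
      (∀ u : Lp ℂ (ENNReal.ofReal p) μ, (G u : S → ℂ) =ᵐ[μ] fun x => Φ (u x)) ∧
      (∀ u : Lp ℂ (ENNReal.ofReal p) μ, HasFDerivAt G (D u) u) ∧
      Continuous D ∧
      (∀ u h : Lp ℂ (ENNReal.ofReal p) μ,
        (D u h : S → ℂ) =ᵐ[μ] fun x => fderiv ℝ Φ (u x) (h x)) ∧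
      (∀ u : Lp ℂ (ENNReal.ofReal p) μ, ‖D u‖ ≤ C * ‖u‖ ^ (α - 1)) := by
  set β := α - 1 with hβdef
  have hβ : 0 < β := by simp only [hβdef]; linarith
  have hα0 : 0 < α := by linarith
  have hp0 : 0 < p := by linarith
  have hβp : β ≤ p := by simp only [hβdef]; linarith
  have hC0 := hC.le
  have : (ENNReal.ofReal (p / β)).HolderTriple (ENNReal.ofReal p) (ENNReal.ofReal (p / α)) := by
    constructor
    rw [← ENNReal.ofReal_inv_of_pos (by positivity), ← ENNReal.ofReal_inv_of_pos hp0,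
      ← ENNReal.ofReal_inv_of_pos (by positivity), ← ENNReal.ofReal_add (by positivity)
      (by positivity)]
    congr 1
    rw [hβdef]
    field_simp
    ring
  have hdiff : Differentiable ℝ Φ := hΦ.differentiable one_ne_zero
  have hcont' : Continuous (fderiv ℝ Φ) := hΦ.continuous_fderiv one_ne_zero
  have hmu (u : Lp ℂ (ENNReal.ofReal p) μ) : Measurable u := (Lp.stronglyMeasurable u).measurable
  have happ (u h : Lp ℂ (ENNReal.ofReal p) μ) : Measurable fun x => fderiv ℝ Φ (u x) (h x) :=
    (hcont'.fst'.clm_apply continuous_snd :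
      Continuous fun z : ℂ × ℂ => fderiv ℝ Φ z.1 z.2).measurable.comp ((hmu u).prodMk (hmu h))
  have memG (u : Lp ℂ (ENNReal.ofReal p) μ) :
      MemLp (fun x => Φ (u x)) (ENNReal.ofReal (p / α)) μ := by
    refine MemLp.of_le_mul (c := C) (memLp_norm_rpow_div hα0 hp0 u)
      (hΦ.continuous.measurable.comp (hmu u)).aestronglyMeasurable (ae_of_all _ fun x => ?_)
    rw [Real.norm_of_nonneg (by positivity)]
    exact hΦ0 _
  have bound (z w : ℂ) : ‖fderiv ℝ Φ z w‖ ≤ C * ‖z‖ ^ β * ‖w‖ :=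
    (ContinuousLinearMap.le_opNorm _ _).trans (by gcongr; exact hΦ1 z)
  have memD (u h : Lp ℂ (ENNReal.ofReal p) μ) :
      MemLp (fun x => fderiv ℝ Φ (u x) (h x)) (ENNReal.ofReal (p / α)) μ := by
    have h1 : MemLp (fun x => ‖u x‖ ^ β * ‖h x‖) (ENNReal.ofReal (p / α)) μ :=
      (Lp.memLp h).norm.mul' (memLp_norm_rpow_div hβ hp0 u)
    refine MemLp.of_le_mul (c := C) h1 (happ u h).aestronglyMeasurable (ae_of_all _ fun x => ?_)
    rw [Real.norm_of_nonneg (by positivity), ← mul_assoc]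
    exact bound _ _
  have normD (u h : Lp ℂ (ENNReal.ofReal p) μ) :
      ‖(memD u h).toLp _‖ ≤ C * ‖u‖ ^ β * ‖h‖ := by
    refine Lp_norm_le_of_le_mul (q := ENNReal.ofReal (p / β)) (a := fun x => C * ‖u x‖ ^ β)
      (by positivity) ((memLp_norm_rpow_div hβ hp0 u).const_mul C).1 ?_ ?_
    · refine (eLpNorm_const_smul C (fun x => ‖u x‖ ^ β) _ μ).le.trans ?_
      rw [eLpNorm_norm_rpow_div hβ hp0, ENNReal.ofReal_mul hC0,
        ← ENNReal.ofReal_rpow_of_nonneg (norm_nonneg _) hβ.le, Lp.norm_def,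
        ENNReal.ofReal_toReal (Lp.eLpNorm_ne_top u), Real.enorm_of_nonneg hC0]
    · filter_upwards [(memD u h).coeFn_toLp] with x hx
      rw [hx]
      exact bound _ _
  let D (u : Lp ℂ (ENNReal.ofReal p) μ) :
      Lp ℂ (ENNReal.ofReal p) μ →L[ℝ] Lp ℂ (ENNReal.ofReal (p / α)) μ :=
    LinearMap.mkContinuous
      { toFun := fun h => (memD u h).toLp _
        map_add' := fun h k => by
          ext1
          filter_upwards [(memD u (h + k)).coeFn_toLp, (memD u h).coeFn_toLp,
            (memD u k).coeFn_toLp, Lp.coeFn_add h k,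
            Lp.coeFn_add ((memD u h).toLp _) ((memD u k).toLp _)] with x h1 h2 h3 h4 h5
          rw [h1, h5, Pi.add_apply, h2, h3, h4, Pi.add_apply, map_add]
        map_smul' := fun c h => by
          ext1
          filter_upwards [(memD u (c • h)).coeFn_toLp, (memD u h).coeFn_toLp,
            Lp.coeFn_smul c h, Lp.coeFn_smul c ((memD u h).toLp _)] with x h1 h2 h3 h4
          rw [RingHom.id_apply, h1, h4, Pi.smul_apply, h2, h3, Pi.smul_apply, map_smul] }
      (C * ‖u‖ ^ β) (normD u)
  have coeD (u h : Lp ℂ (ENNReal.ofReal p) μ) :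
      (D u h : S → ℂ) =ᵐ[μ] fun x => fderiv ℝ Φ (u x) (h x) := (memD u h).coeFn_toLp
  refine ⟨fun u => (memG u).toLp _, D, fun u => (memG u).coeFn_toLp, fun u => ?_, ?_, coeD,
    fun u => LinearMap.mkContinuous_norm_le _ (by positivity) _⟩
  · have hmρ : Measurable (Function.uncurry fun z w : ℂ =>
        ‖w‖⁻¹ * ‖Φ (z + w) - Φ z - fderiv ℝ Φ z w‖) := by
      have hc : Continuous fun z : ℂ × ℂ => Φ (z.1 + z.2) - Φ z.1 - fderiv ℝ Φ z.1 z.2 :=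
        ((hΦ.continuous.comp (continuous_fst.add continuous_snd)).sub
          (hΦ.continuous.comp continuous_fst)).sub (hcont'.fst'.clm_apply continuous_snd)
      exact measurable_snd.norm.inv.mul hc.measurable.norm
    have hlim := tendsto_eLpNorm_superposition (μ := μ) (K := 2 * C) hβ hβp (by positivity) hmρ
      (fun z w => by positivity) (fun z w => ?_) (fun z => ?_) u
    · rw [hasFDerivAt_iff_isLittleO_nhds_zero]
      refine Asymptotics.IsLittleO.of_bound fun c hc => ?_
      filter_upwards [hlim.eventually_le_const (ENNReal.ofReal_pos.2 hc)] with h hh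
      refine Lp_norm_le_of_le_mul hc.le (hmρ.comp ((hmu u).prodMk (hmu h))).aestronglyMeasurable
        hh ?_
      filter_upwards [(memG (u + h)).coeFn_toLp, (memG u).coeFn_toLp, coeD u h,
        Lp.coeFn_add u h, Lp.coeFn_sub ((memG (u + h)).toLp _ - (memG u).toLp _) (D u h),
        Lp.coeFn_sub ((memG (u + h)).toLp _) ((memG u).toLp _)] with x h1 h2 h3 h4 h5 h6
      rw [h5, Pi.sub_apply, h6, Pi.sub_apply, h1, h2, h3, h4, Pi.add_apply]
      simp only [Function.comp_apply, Function.uncurry_apply_pair]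
      rcases eq_or_ne (h x) 0 with h0 | h0
      · simp [h0]
      · have : ‖h x‖ ≠ 0 := norm_ne_zero_iff.2 h0
        exact le_of_eq (by field_simp)
    · -- The mean value inequality on the ball of radius `‖z‖ + ‖w‖` bounds `Φ (z + w) - Φ z`.
      have mv : ‖Φ (z + w) - Φ z‖ ≤ C * (‖z‖ + ‖w‖) ^ β * ‖z + w - z‖ := by
        refine (convex_closedBall (0 : ℂ) (‖z‖ + ‖w‖)).norm_image_sub_le_of_norm_fderiv_le
          (𝕜 := ℝ) (fun y _ => hdiff y) (fun y hy => (hΦ1 y).trans ?_) ?_ ?_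
        · rw [mem_closedBall_zero_iff] at hy
          gcongr
        · rw [mem_closedBall_zero_iff]
          linarith [norm_nonneg w]
        · rw [mem_closedBall_zero_iff]
          exact norm_add_le _ _
      rw [add_sub_cancel_left] at mv
      have h2 : ‖fderiv ℝ Φ z w‖ ≤ C * (‖z‖ + ‖w‖) ^ β * ‖w‖ := by
        refine (bound z w).trans ?_
        gcongr
        linarith [norm_nonneg w]
      rcases eq_or_ne w 0 with h0 | h0
      · simp only [h0, norm_zero, inv_zero, zero_mul]
        positivity
      · rw [inv_mul_le_iff₀ (norm_pos_iff.2 h0)]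
        linarith [norm_sub_le (Φ (z + w) - Φ z) (fderiv ℝ Φ z w)]
    · have := (hasFDerivAt_iff_tendsto.1 (hdiff z).hasFDerivAt).comp
        (show Filter.Tendsto (fun w : ℂ => z + w) (nhds 0) (nhds z) from
          Continuous.tendsto' (by fun_prop) _ _ (add_zero z))
      simpa [Function.comp_def] using this
  · rw [continuous_iff_continuousAt]
    intro u
    have hmρ : Measurable (Function.uncurry fun z w : ℂ =>
        ‖fderiv ℝ Φ (z + w) - fderiv ℝ Φ z‖) := by
      have hc : Continuous fun z : ℂ × ℂ => ‖fderiv ℝ Φ (z.1 + z.2) - fderiv ℝ Φ z.1‖ := by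
        fun_prop
      exact hc.measurable
    have hlim := tendsto_eLpNorm_superposition (μ := μ) (K := 2 * C) hβ hβp (by positivity) hmρ
      (fun z w => by positivity) (fun z w => ?_) (fun z => ?_) u
    · have hlim' := hlim.comp (show Filter.Tendsto (fun v => v - u) (nhds u) (nhds 0) from
          Continuous.tendsto' (by fun_prop) _ _ (sub_self u))
      rw [ContinuousAt, Metric.tendsto_nhds]
      intro ε hε
      filter_upwards [hlim'.eventually_le_const (ENNReal.ofReal_pos.2 (half_pos hε))] with v hv
      rw [dist_eq_norm]
      refine lt_of_le_of_lt (ContinuousLinearMap.opNorm_le_bound _ (half_pos hε).le fun h => ?_)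
        (half_lt_self hε)
      refine Lp_norm_le_of_le_mul (half_pos hε).le
        (hmρ.comp ((hmu u).prodMk (hmu (v - u)))).aestronglyMeasurable hv ?_
      filter_upwards [coeD u h, coeD v h, Lp.coeFn_sub (D v h) (D u h), Lp.coeFn_sub v u]
        with x h1 h2 h3 h4
      rw [_root_.sub_apply, h3, Pi.sub_apply, h1, h2]
      simp only [Function.comp_apply, Function.uncurry_apply_pair]
      rw [h4, Pi.sub_apply, add_sub_cancel, ← _root_.sub_apply]
      exact ContinuousLinearMap.le_opNorm _ _
    · have h1 : ‖fderiv ℝ Φ (z + w)‖ ≤ C * (‖z‖ + ‖w‖) ^ β := by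
        refine (hΦ1 _).trans ?_
        gcongr
        exact norm_add_le _ _
      have h2 : ‖fderiv ℝ Φ z‖ ≤ C * (‖z‖ + ‖w‖) ^ β := by
        refine (hΦ1 _).trans ?_
        gcongr
        linarith [norm_nonneg w]
      linarith [norm_sub_le (fderiv ℝ Φ (z + w)) (fderiv ℝ Φ z)]
    · exact Continuous.tendsto' (by fun_prop) _ _ (by simp)
end
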